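/- Let E be a finite set and let P be a hypercube partition of the power set of E, i.e., a partition of 2^E into pairwise disjoint intervals [A, B] = {C : A ⊆ C ⊆ B}. Define τ : 2^E → 2^E by τ(X) = B, where [A, B] is the block of P containing X. Then τ satisfies C1 (X ⊆ τ(X) for all X ⊆ E) and C22 (F ⊆ G ⊆ τ(F) implies τ(G) = τ(F)), the space (E, τ) is uniquely generated, and the equivalence classes of the relation τ(X) = τ(Y) are exactly the blocks of P. -/

import Mathlib

/-- `B` is a basis of `X` w.r.t. `τ`: a generator of `X` minimal under inclusion. -/
def IsBasis {α : Type*} (τ : Finset α → Finset α) (X B : Finset α) : Prop :=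
  τ B = τ X ∧ ∀ B' : Finset α, τ B' = τ X → B' ⊆ B → B' = B

/-!
A map sending each block of a partition to its greatest element takes its value inside the block,
so different blocks have different values and the fibres of the map are exactly the blocks. When
the blocks are intervals, C22 is the order-convexity of an interval, and the unique basis of `X`
is the bottom of the interval containing `X`.
-/

/-- A partition of an ordered type into nonempty closed intervals. For the type of subsets of a
set, ordered by inclusion, this is a hypercube partition. -/
structure IsIntervalPartition {α : Type*} [Preorder α] (P : Set (Set α)) : Prop where
  exists_eq_Icc : ∀ S ∈ P, ∃ a b : α, a ≤ b ∧ S = Set.Icc a b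
  existsUnique_mem : ∀ x : α, ∃! S : Set α, S ∈ P ∧ x ∈ S

/-- `τ` sends every point of a block of `P` to the greatest element of that block: the operator
that `P` induces. -/
def IsBlockTop {α : Type*} [Preorder α] (P : Set (Set α)) (τ : α → α) : Prop :=
  ∀ S ∈ P, ∀ x ∈ S, IsGreatest S (τ x)

namespace IsIntervalPartition

variable {α : Type*} [Preorder α] {P : Set (Set α)}

theorem isPartition (hP : IsIntervalPartition P) : Setoid.IsPartition P := by
  refine ⟨fun h_empty ↦ ?_, hP.existsUnique_mem⟩
  obtain ⟨a, b, hab, h_eq⟩ := hP.exists_eq_Icc ∅ h_empty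
  exact (Set.nonempty_Icc.2 hab).ne_empty h_eq.symm

theorem isBlockTop (hP : IsIntervalPartition P) {τ : α → α}
    (hτ : ∀ a b, Set.Icc a b ∈ P → ∀ x ∈ Set.Icc a b, τ x = b) : IsBlockTop P τ := by
  intro S hS x hx
  obtain ⟨a, b, hab, rfl⟩ := hP.exists_eq_Icc S hS
  rw [hτ a b hS x hx]
  exact isGreatest_Icc hab

theorem ordConnected (hP : IsIntervalPartition P) {S : Set α} (hS : S ∈ P) : S.OrdConnected := by
  obtain ⟨a, b, -, rfl⟩ := hP.exists_eq_Icc S hS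
  exact Set.ordConnected_Icc

theorem exists_isLeast (hP : IsIntervalPartition P) {S : Set α} (hS : S ∈ P) :
    ∃ a, IsLeast S a := by
  obtain ⟨a, b, hab, rfl⟩ := hP.exists_eq_Icc S hS
  exact ⟨a, isLeast_Icc hab⟩

end IsIntervalPartition

namespace IsBlockTop

section Preorder

variable {α : Type*} [Preorder α] {P : Set (Set α)} {τ : α → α} {S : Set α} {x : α}

theorem map_mem (hτ : IsBlockTop P τ) (hS : S ∈ P) (hx : x ∈ S) : τ x ∈ S :=
  (hτ S hS x hx).1

theorem le_map (hτ : IsBlockTop P τ) (hS : S ∈ P) (hx : x ∈ S) : x ≤ τ x :=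
  (hτ S hS x hx).2 hx

end Preorder

variable {α : Type*} [PartialOrder α] {P : Set (Set α)} {τ : α → α} {S : Set α} {x y : α}

theorem map_eq_map (hτ : IsBlockTop P τ) (hS : S ∈ P) (hx : x ∈ S) (hy : y ∈ S) : τ x = τ y :=
  (hτ S hS x hx).unique (hτ S hS y hy)

theorem map_eq_map_iff_mem (hτ : IsBlockTop P τ) (hP : Setoid.IsPartition P) (hS : S ∈ P)
    (hx : x ∈ S) : τ y = τ x ↔ y ∈ S := by
  refine ⟨fun h ↦ ?_, fun hy ↦ hτ.map_eq_map hS hy hx⟩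
  obtain ⟨T, ⟨hT, hy⟩, -⟩ := hP.2 y
  have hTS : T = S :=
    hP.pairwiseDisjoint.elim_set hT hS (τ x) (h ▸ hτ.map_mem hT hy) (hτ.map_mem hS hx)
  exact hTS ▸ hy

theorem map_eq_map_of_le_of_le (hτ : IsBlockTop P τ) (hS : S ∈ P) (hconn : S.OrdConnected)
    (hx : x ∈ S) (hxy : x ≤ y) (hyx : y ≤ τ x) : τ y = τ x :=
  hτ.map_eq_map hS (hconn.out hx (hτ.map_mem hS hx) ⟨hxy, hyx⟩) hx

theorem existsUnique_minimal (hτ : IsBlockTop P τ) (hP : Setoid.IsPartition P) (hS : S ∈ P)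
    (hleast : ∃ a, IsLeast S a) (hx : x ∈ S) : ∃! b, Minimal (fun y ↦ τ y = τ x) b := by
  obtain ⟨a, ha⟩ := hleast
  simp only [hτ.map_eq_map_iff_mem hP hS hx, ha.minimal_iff, existsUnique_eq]

end IsBlockTop

theorem isBasis_iff_minimal {α : Type*} {τ : Finset α → Finset α} {X B : Finset α} :
    IsBasis τ X B ↔ Minimal (fun C ↦ τ C = τ X) B := by
  simp only [IsBasis, minimal_iff, eq_comm (a := B)]

theorem hypercubePartition_gives_uniquelyGenerated_violator_general
    {α : Type*} [PartialOrder α] {P : Set (Set α)} (hP : IsIntervalPartition P)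
    {τ : α → α} (hτ : IsBlockTop P τ) :
    (∀ x, x ≤ τ x) ∧
    (∀ x y, x ≤ y → y ≤ τ x → τ y = τ x) ∧
    (∀ x, ∃! b, Minimal (fun y ↦ τ y = τ x) b) ∧
    (∀ S ∈ P, ∀ x ∈ S, S = {y | τ y = τ x}) := by
  have exists_block (x : α) : ∃ S ∈ P, x ∈ S := (hP.existsUnique_mem x).exists
  refine ⟨fun x ↦ ?_, fun x y hxy hyx ↦ ?_, fun x ↦ ?_, fun S hS x hx ↦ ?_⟩
  · obtain ⟨S, hS, hx⟩ := exists_block x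
    exact hτ.le_map hS hx
  · obtain ⟨S, hS, hx⟩ := exists_block x
    exact hτ.map_eq_map_of_le_of_le hS (hP.ordConnected hS) hx hxy hyx
  · obtain ⟨S, hS, hx⟩ := exists_block x
    exact hτ.existsUnique_minimal hP.isPartition hS (hP.exists_isLeast hS) hx
  · exact Set.ext fun y ↦ (hτ.map_eq_map_iff_mem hP.isPartition hS hx).symm

/-- If P is a hypercube partition of the power set of E (every block
is an interval [A,B] and every X lies in exactly one block), and τ(X) is defined to
be the top of the block containing X, then τ satisfies C1 and C22, the resulting
space is uniquely generated, and the equivalence classes of τ(X) = τ(Y) are exactly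
the blocks of P. -/
theorem hypercubePartition_gives_uniquelyGenerated_violator
    {α : Type*} [Fintype α] [DecidableEq α]
    (P : Set (Set (Finset α)))
    (hInt : ∀ S ∈ P, ∃ A B : Finset α, A ⊆ B ∧ S = {C : Finset α | A ⊆ C ∧ C ⊆ B})
    (hPart : ∀ X : Finset α, ∃! S : Set (Finset α), S ∈ P ∧ X ∈ S)
    (τ : Finset α → Finset α)
    (hτ : ∀ (X : Finset α) (S : Set (Finset α)), S ∈ P → X ∈ S →
      ∀ A B : Finset α, A ⊆ B → S = {C : Finset α | A ⊆ C ∧ C ⊆ B} → τ X = B) :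
    (∀ X : Finset α, X ⊆ τ X) ∧
    (∀ F G : Finset α, F ⊆ G → G ⊆ τ F → τ G = τ F) ∧
    (∀ X : Finset α, ∃! B : Finset α, IsBasis τ X B) ∧
    (∀ S ∈ P, ∀ X ∈ S, S = {Y : Finset α | τ Y = τ X}) := by
  have hP : IsIntervalPartition P := ⟨hInt, hPart⟩
  simpa only [isBasis_iff_minimal] using
    hypercubePartition_gives_uniquelyGenerated_violator_general hP <|
      hP.isBlockTop fun A B hS X hX ↦ hτ X _ hS hX A B (hX.1.trans hX.2) rfl
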